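/- Let μ be a probability measure on {0,1}^{ℤ²} which is positively associated, satisfies the bounded energy condition, is such that μ-almost surely there exists exactly one infinite 0cluster and at most one infinite 1*cluster, and for which there is a constant c > 0 with μ(x belongs to an infinite 1*cluster) ≥ c for every x ∈ ℤ². Then for every finite set Δ ⊂ ℤ² containing the origin, the μ-probability that there exists a 1*circuit around Δ is at least c⁴/16. -/

import Mathlib

/-!
The idea is to close up two paths on the two sides of `Δ` into a circuit, using positive
association. Enlarge `Δ` to a square `B = box N`.

Deleting `B` leaves only finitely many sites of infinite `1*`clusters in finite components
(`bad_finite`). By bounded energy and uniqueness there is almost surely at most one infinite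
component outside `B`, since otherwise switching `B` to `0` would create two infinite `1*`clusters
(`ae_unique_outside`). Hence any two sufficiently remote sites `x`, `y` are joined by a `1*`path
avoiding `B` with probability at least `c²/2` (`exists_box_reach`).

Paths outside `B` carry a signed number of crossings of the half-line to the left of the origin,
placed between rows `0` and `-1`. For closed paths outside `B` this number is the winding number
around every site of `B` (`arg_step`, `crossing_sub`, `exists_angle`), so a closed `1*`path with a
non-zero crossing number is a `1*`circuit around `B` (`Walk.circuit`).

Take a remote site `x₀` just below the cut, and let `y` run around `B` through remote sites to the
neighbour `y₀` of `x₀` just above the cut, without crossing the cut. For each `y`, the walks from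
`x₀` to `y` with crossing number `≥ 0`, or those with crossing number `< 0`, exist with probability
at least `c²/4`. If at `y = x₀` the negative class is likely, or at `y = y₀` the non-negative one,
then such a walk closes to a circuit. Otherwise the likely class switches between two consecutive
sites `p`, `q`; by positive association walks of both classes, to `p` and to `q`, are present
simultaneously with probability at least `(c²/4)² = c⁴/16`, and together with the step `p → q` they
form a closed walk with non-zero crossing number (`circuit_of_reach`).
-/

open MeasureTheory ProbabilityTheory
open scoped ENNReal

namespace Percolation

/-- Sites of the square lattice. -/
abbrev Site : Type := ℤ × ℤ

/-- Configurations: spins `0`/`1` encoded as `false`/`true`. -/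
abbrev Config : Type := Site → Bool

/-- Nearest-neighbour adjacency: Euclidean distance `1`. -/
def adj (x y : Site) : Prop :=
  (x.1 - y.1) ^ 2 + (x.2 - y.2) ^ 2 = 1

/-- `*`adjacency: Euclidean distance `1` or `√2`. -/
def adjStar (x y : Site) : Prop :=
  x ≠ y ∧ |x.1 - y.1| ≤ 1 ∧ |x.2 - y.2| ≤ 1

/-- `x` and `y` are joined inside `G` by a path whose consecutive sites satisfy `R`. -/
def JoinedIn (R : Site → Site → Prop) (G : Set Site) (x y : Site) : Prop :=
  ∃ P : List Site, P.Chain' R ∧ (∀ z ∈ P, z ∈ G) ∧ P.head? = some x ∧ P.getLast? = some y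

/-- `S` is a `0`cluster of `σ`: a maximal `adj`-connected subset of `σ⁻¹(0)`. -/
def IsCluster0 (σ : Config) (S : Set Site) : Prop :=
  S.Nonempty ∧ (∀ z ∈ S, σ z = false) ∧
    (∀ x ∈ S, ∀ y ∈ S, JoinedIn adj S x y) ∧
    (∀ x ∈ S, ∀ y : Site, adj x y → σ y = false → y ∈ S)

/-- `S` is a `1*`cluster of `σ`: a maximal `adjStar`-connected subset of `σ⁻¹(1)`. -/
def IsCluster1 (σ : Config) (S : Set Site) : Prop :=
  S.Nonempty ∧ (∀ z ∈ S, σ z = true) ∧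
    (∀ x ∈ S, ∀ y ∈ S, JoinedIn adjStar S x y) ∧
    (∀ x ∈ S, ∀ y : Site, adjStar x y → σ y = true → y ∈ S)

/-- `x` belongs to an infinite `1*`cluster of `σ`. -/
def InInfinite1 (σ : Config) (x : Site) : Prop :=
  ∃ S : Set Site, IsCluster1 σ S ∧ S.Infinite ∧ x ∈ S

/-- There is exactly one infinite `0`cluster. -/
def UniqueInfinite0 (σ : Config) : Prop :=
  ∃! S : Set Site, IsCluster0 σ S ∧ S.Infinite

/-- There is exactly one infinite `1*`cluster. -/
def UniqueInfinite1 (σ : Config) : Prop :=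
  ∃! S : Set Site, IsCluster1 σ S ∧ S.Infinite

/-- There is at most one infinite `1*`cluster. -/
def AtMostOneInfinite1 (σ : Config) : Prop :=
  ∀ S T : Set Site, IsCluster1 σ S → S.Infinite → IsCluster1 σ T → T.Infinite → S = T

/-- An infinite `1*`cluster exists. -/
def ExistsInfinite1 (σ : Config) : Prop := ∃ S : Set Site, IsCluster1 σ S ∧ S.Infinite

/-- An infinite `0`cluster exists. -/
def ExistsInfinite0 (σ : Config) : Prop := ∃ S : Set Site, IsCluster0 σ S ∧ S.Infinite

/-- An increasing event. -/
def IncreasingEvent (A : Set Config) : Prop :=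
  ∀ ⦃ξ η : Config⦄, ξ ∈ A → ξ ≤ η → η ∈ A

/-- Positive association: increasing events are positively correlated. -/
def PositivelyAssociated (μ : Measure Config) : Prop :=
  ∀ A B : Set Config, MeasurableSet A → MeasurableSet B →
    IncreasingEvent A → IncreasingEvent B → μ A * μ B ≤ μ (A ∩ B)

/-- The cylinder event "`η` on `Δ`". -/
def cylEvent (Δ : Finset Site) (η : Site → Bool) : Set Config :=
  {σ | ∀ z ∈ Δ, σ z = η z}

/-- The σ-algebra generated by the spins outside `Δ`. -/
def outsideAlgebra (Δ : Finset Site) : MeasurableSpace Config :=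
  MeasurableSpace.comap (fun σ (z : {z : Site // z ∉ Δ}) => σ z.1) inferInstance

/-- The bounded energy condition: `μ(η on Δ | ξ off Δ) ≥ c_{|Δ|}` for a.e. `ξ`, expressed
via integrated conditional probabilities against events of the outside σ-algebra. -/
def BoundedEnergy (μ : Measure Config) : Prop :=
  ∀ n : ℕ, ∃ c : ℝ≥0∞, 0 < c ∧
    ∀ Δ : Finset Site, Δ.card = n → ∀ η : Site → Bool,
      ∀ B : Set Config, MeasurableSet[outsideAlgebra Δ] B →
        c * μ B ≤ μ (cylEvent Δ η ∩ B)

/-- The finite energy condition: `μ(η on Δ | ξ off Δ) > 0` for a.e. `ξ`, expressed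
via integrated conditional probabilities against events of the outside σ-algebra. -/
def FiniteEnergy (μ : Measure Config) : Prop :=
  ∀ (Δ : Finset Site) (η : Site → Bool) (B : Set Config),
    MeasurableSet[outsideAlgebra Δ] B → 0 < μ B → 0 < μ (cylEvent Δ η ∩ B)

/-- The tail σ-algebra. -/
def tailAlgebra : MeasurableSpace Config :=
  ⨅ Δ : Finset Site, outsideAlgebra Δ

/-- Translation of configurations by `v`. -/
def shift (v : Site) (σ : Config) : Config := fun z => σ (z + v)

/-- A site viewed as a complex number. -/
noncomputable def toC (z : Site) : ℂ := (z.1 : ℂ) + (z.2 : ℂ) * Complex.I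

/-- Winding number around the origin of the polygonal curve through the sites of `P`. -/
noncomputable def winding (P : List Site) : ℝ :=
  (1 / (2 * Real.pi)) *
    ((P.zip P.tail).map fun p => Complex.arg (toC p.2 / toC p.1)).sum

/-- Winding number of `P` around the site `w`. -/
noncomputable def windingAround (P : List Site) (w : Site) : ℝ :=
  winding (P.map fun z => z - w)

/-- The site `w` lies in the interior of the circuit `C`, i.e. is enclosed by `C`. -/
def circuitEncloses (C : List Site) (w : Site) : Prop :=
  w ∉ C ∧ windingAround (C ++ C.take 1) w ≠ 0

/-- A circuit: a path whose starting site is adjacent to its ending site. -/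
def IsCircuit (C : List Site) : Prop :=
  C.Chain' adj ∧ ∃ h : C ≠ [], adj (C.getLast h) (C.head h)

/-- A `*`circuit: a `*`path whose starting site is `*`adjacent to its ending site. -/
def IsStarCircuit (C : List Site) : Prop :=
  C.Chain' adjStar ∧ ∃ h : C ≠ [], adjStar (C.getLast h) (C.head h)

/-- A (finite) `1*`path with respect to `σ`. -/
def Is1StarPath (σ : Config) (P : List Site) : Prop :=
  P ≠ [] ∧ P.Chain' adjStar ∧ ∀ z ∈ P, σ z = true

/-- A (finite) `0`path with respect to `σ`. -/
def Is0Path (σ : Config) (P : List Site) : Prop :=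
  P ≠ [] ∧ P.Chain' adj ∧ ∀ z ∈ P, σ z = false

/-- A `1*`circuit with respect to `σ`. -/
def Is1StarCircuit (σ : Config) (C : List Site) : Prop :=
  IsStarCircuit C ∧ ∀ z ∈ C, σ z = true

/-- A `0`circuit with respect to `σ`. -/
def Is0Circuit (σ : Config) (C : List Site) : Prop :=
  IsCircuit C ∧ ∀ z ∈ C, σ z = false

/-- `C` is a circuit around `Δ`: every site of `Δ` is enclosed by `C`. -/
def CircuitAround (C : List Site) (Δ : Set Site) : Prop :=
  ∀ z ∈ Δ, circuitEncloses C z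

/-- A mixed circuit with respect to `σ`: a self-avoiding `*`circuit consisting of a
self-avoiding `1*`path followed by a self-avoiding `0`path (either part may be empty). -/
def IsMixedCircuit (σ : Config) (C : List Site) : Prop :=
  ∃ P Q : List Site, C = P ++ Q ∧ C.Nodup ∧
    P.Chain' adjStar ∧ Q.Chain' adj ∧
    (∀ z ∈ P, σ z = true) ∧ (∀ z ∈ Q, σ z = false) ∧ IsStarCircuit C

/-- `z` lies in the exterior of the circuit `C`. -/
def InExterior (C : List Site) (z : Site) : Prop :=
  z ∉ C ∧ ¬ circuitEncloses C z

/-- An infinite self-avoiding `1*`path with respect to `σ`. -/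
def IsInfSA1StarPath (σ : Config) (f : ℕ → Site) : Prop :=
  Function.Injective f ∧ (∀ i, adjStar (f i) (f (i + 1))) ∧ ∀ i, σ (f i) = true

/-- An infinite self-avoiding `0`path with respect to `σ`. -/
def IsInfSA0Path (σ : Config) (f : ℕ → Site) : Prop :=
  Function.Injective f ∧ (∀ i, adj (f i) (f (i + 1))) ∧ ∀ i, σ (f i) = false

/-- There exist `n` pairwise disjoint infinite self-avoiding `1*`paths. -/
def HasNDisjoint1 (σ : Config) (n : ℕ) : Prop :=
  ∃ f : Fin n → ℕ → Site, (∀ i, IsInfSA1StarPath σ (f i)) ∧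
    ∀ i j, i ≠ j → Disjoint (Set.range (f i)) (Set.range (f j))

/-- A two-sided infinite self-avoiding `1*`path with respect to `σ`. -/
def IsTwoSidedInf1 (σ : Config) (f : ℤ → Site) : Prop :=
  Function.Injective f ∧ (∀ i : ℤ, adjStar (f i) (f (i + 1))) ∧ ∀ i : ℤ, σ (f i) = true

/-- A `1*`path of `σ` from `x` to `y` avoiding `Δ`. -/
def starPathBetweenAvoiding (σ : Config) (Δ : Set Site) (x y : Site) (P : List Site) : Prop :=
  Is1StarPath σ P ∧ P.head? = some x ∧ P.getLast? = some y ∧ ∀ z ∈ P, z ∉ Δ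

/-- `x` is on the left side of `Γ`. -/
def OnLeftSide (x : Site) (Γ : Set Site) : Prop :=
  ∃ d : ℕ, 0 < d ∧ (∀ z ∈ Γ, |z.1| ≤ (d : ℤ) ∧ |z.2| ≤ (d : ℤ)) ∧ x.1 ≤ -(d : ℤ)

/-- `x` is on the right side of `Γ`. -/
def OnRightSide (x : Site) (Γ : Set Site) : Prop :=
  ∃ d : ℕ, 0 < d ∧ (∀ z ∈ Γ, |z.1| ≤ (d : ℤ) ∧ |z.2| ≤ (d : ℤ)) ∧ (d : ℤ) ≤ x.1

/-- The square `{-n, …, n}²`. -/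
def square (n : ℕ) : Set Site := {z : Site | |z.1| ≤ (n : ℤ) ∧ |z.2| ≤ (n : ℤ)}

/-- The `*`boundary `∂*B` of a set of sites. -/
def starBoundary (B : Set Site) : Set Site :=
  {x | x ∉ B ∧ ∃ y ∈ B, adjStar x y}

/-- The union of all infinite `1*`clusters of `σ`. -/
def InfinitePart1 (σ : Config) : Set Site := {z | InInfinite1 σ z}

/-- The filled infinite `1*`cluster `S₁*`: the infinite `1*`cluster together with all
finite `0`clusters `*`encircled by it. -/
def Fill (σ : Config) : Set Site :=
  InfinitePart1 σ ∪
    {z | ∃ F : Set Site, IsCluster0 σ F ∧ F.Finite ∧ z ∈ F ∧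
      ∃ C : List Site, IsStarCircuit C ∧ (∀ w ∈ C, w ∈ InfinitePart1 σ) ∧
        ∀ w ∈ F, circuitEncloses C w}

/-- The indicator of the filled infinite `1*`cluster, as a point of `{0,1}^{ℤ²}`. -/
noncomputable def fillInd (σ : Config) : Site → Bool :=
  fun z => @decide (z ∈ Fill σ) (Classical.propDecidable _)

/-- Exactly one infinite `0`cluster and exactly one infinite `1*`cluster coexist. -/
def CoexistUnique (σ : Config) : Prop := UniqueInfinite0 σ ∧ UniqueInfinite1 σ


/-! ### Winding numbers as signed crossings of a half-line -/

/-- Signed crossing number of the step `p → q` with the cut just below the negative half-axis: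
`1` for a step from row `0` down to row `-1` that starts to the left of the origin, `-1` for a
reversed such step, and `0` for all other steps. -/
def crossing (p q : Site) : ℤ :=
  if p.2 = 0 ∧ q.2 = -1 ∧ p.1 < 0 then 1
  else if q.2 = 0 ∧ p.2 = -1 ∧ q.1 < 0 then -1 else 0

lemma crossing_symm (p q : Site) : crossing q p = - crossing p q := by
  unfold crossing
  split_ifs <;> omega

lemma adjStar_symm {p q : Site} (h : adjStar p q) : adjStar q p := by
  refine ⟨h.1.symm, ?_, ?_⟩
  · rw [abs_sub_comm]; exact h.2.1
  · rw [abs_sub_comm]; exact h.2.2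

lemma adjStar_bounds {p q : Site} (h : adjStar p q) :
    p ≠ q ∧ p.1 - q.1 ≤ 1 ∧ q.1 - p.1 ≤ 1 ∧ p.2 - q.2 ≤ 1 ∧ q.2 - p.2 ≤ 1 := by
  obtain ⟨h0, h1, h2⟩ := h
  rw [abs_le] at h1 h2
  exact ⟨h0, by omega, by omega, by omega, by omega⟩

/-- The square `{-N, …, N}²` as a finset. -/
noncomputable def box (N : ℤ) : Finset Site := Finset.Icc (-N) N ×ˢ Finset.Icc (-N) N

lemma mem_box {N : ℤ} {p : Site} :
    p ∈ box N ↔ (-N ≤ p.1 ∧ p.1 ≤ N) ∧ (-N ≤ p.2 ∧ p.2 ≤ N) := by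
  simp [box]

lemma toC_re (p : Site) : (toC p).re = p.1 := by simp [toC]
lemma toC_im (p : Site) : (toC p).im = p.2 := by simp [toC]

lemma toC_ne_zero {p : Site} (h : p ≠ 0) : toC p ≠ 0 := by
  intro h'
  apply h
  have h1 := congrArg Complex.re h'
  have h2 := congrArg Complex.im h'
  rw [toC_re] at h1
  rw [toC_im] at h2
  simp only [Complex.zero_re, Complex.zero_im, Int.cast_eq_zero] at h1 h2
  exact Prod.ext h1 h2

/-- The increment of the argument is determined by its class modulo `2π` and a strict bound. -/
lemma arg_div_of_bound {z w : ℂ} (hz : z ≠ 0) (hw : w ≠ 0) (m : ℤ)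
    (h1 : -Real.pi < w.arg - z.arg + 2 * Real.pi * m)
    (h2 : w.arg - z.arg + 2 * Real.pi * m < Real.pi) :
    (w / z).arg = w.arg - z.arg + 2 * Real.pi * m := by
  have h := Complex.arg_div_coe_angle hw hz
  rw [← Real.Angle.coe_sub, Real.Angle.angle_eq_iff_two_pi_dvd_sub] at h
  obtain ⟨k, hk⟩ := h
  have h3 := Complex.neg_pi_lt_arg (w / z)
  have h4 := Complex.arg_le_pi (w / z)
  have hpi := Real.pi_pos
  have h5 : ((k : ℝ) - m) < 1 := by
    by_contra hc
    nlinarith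
  have h6 : (-1 : ℝ) < (k : ℝ) - m := by
    by_contra hc
    nlinarith
  have h7 : k - m < 1 := by exact_mod_cast h5
  have h8 : -1 < k - m := by exact_mod_cast h6
  have h9 : k = m := by omega
  subst h9
  linarith

/-- Along a `*`step avoiding the origin the argument changes by the naive difference, corrected
by `2π` times the signed crossing number of the cut of `Complex.arg`. -/
lemma arg_step {p q : Site} (hp : p ≠ 0) (hq : q ≠ 0) (h : adjStar p q) :
    Complex.arg (toC q / toC p) =
      Complex.arg (toC q) - Complex.arg (toC p) + 2 * Real.pi * (crossing p q : ℤ) := by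
  obtain ⟨hne, b1, b2, b3, b4⟩ := adjStar_bounds h
  have hp' : ¬ (p.1 = 0 ∧ p.2 = 0) := fun h => hp (Prod.ext h.1 h.2)
  have hq' : ¬ (q.1 = 0 ∧ q.2 = 0) := fun h => hq (Prod.ext h.1 h.2)
  have hpi := Real.pi_pos
  have P0 : 0 ≤ (toC p).arg ↔ 0 ≤ p.2 := by
    rw [Complex.arg_nonneg_iff, toC_im, Int.cast_nonneg_iff]
  have Q0 : 0 ≤ (toC q).arg ↔ 0 ≤ q.2 := by
    rw [Complex.arg_nonneg_iff, toC_im, Int.cast_nonneg_iff]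
  have Pz : (toC p).arg = 0 ↔ 0 ≤ p.1 ∧ p.2 = 0 := by
    rw [Complex.arg_eq_zero_iff, toC_im, toC_re, Int.cast_nonneg_iff, Int.cast_eq_zero]
  have Qz : (toC q).arg = 0 ↔ 0 ≤ q.1 ∧ q.2 = 0 := by
    rw [Complex.arg_eq_zero_iff, toC_im, toC_re, Int.cast_nonneg_iff, Int.cast_eq_zero]
  have Pp : (toC p).arg = Real.pi ↔ p.1 < 0 ∧ p.2 = 0 := by
    rw [Complex.arg_eq_pi_iff, toC_im, toC_re, Int.cast_eq_zero, Int.cast_lt_zero]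
  have Qp : (toC q).arg = Real.pi ↔ q.1 < 0 ∧ q.2 = 0 := by
    rw [Complex.arg_eq_pi_iff, toC_im, toC_re, Int.cast_eq_zero, Int.cast_lt_zero]
  have Ph : -(Real.pi / 2) ≤ (toC p).arg ↔ 0 ≤ p.1 ∨ 0 ≤ p.2 := by
    rw [Complex.neg_pi_div_two_le_arg_iff, toC_im, toC_re, Int.cast_nonneg_iff,
      Int.cast_nonneg_iff]
  have Qh : -(Real.pi / 2) ≤ (toC q).arg ↔ 0 ≤ q.1 ∨ 0 ≤ q.2 := by
    rw [Complex.neg_pi_div_two_le_arg_iff, toC_im, toC_re, Int.cast_nonneg_iff,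
      Int.cast_nonneg_iff]
  have Pu : (toC p).arg ≤ Real.pi / 2 ↔ 0 ≤ p.1 ∨ p.2 < 0 := by
    rw [Complex.arg_le_pi_div_two_iff, toC_im, toC_re, Int.cast_nonneg_iff, Int.cast_lt_zero]
  have Qu : (toC q).arg ≤ Real.pi / 2 ↔ 0 ≤ q.1 ∨ q.2 < 0 := by
    rw [Complex.arg_le_pi_div_two_iff, toC_im, toC_re, Int.cast_nonneg_iff, Int.cast_lt_zero]
  have P1 := Complex.neg_pi_lt_arg (toC p)
  have P2 := Complex.arg_le_pi (toC p)
  have Q1 := Complex.neg_pi_lt_arg (toC q)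
  have Q2 := Complex.arg_le_pi (toC q)
  have key : ∀ m : ℤ, crossing p q = m →
      -Real.pi < (toC q).arg - (toC p).arg + 2 * Real.pi * m →
      (toC q).arg - (toC p).arg + 2 * Real.pi * m < Real.pi →
      Complex.arg (toC q / toC p) =
      Complex.arg (toC q) - Complex.arg (toC p) + 2 * Real.pi * (crossing p q : ℤ) := by
    intro m hm h1 h2
    rw [hm]
    exact arg_div_of_bound (toC_ne_zero hp) (toC_ne_zero hq) m h1 h2
  generalize (toC p).arg = a at *
  generalize (toC q).arg = b at *
  rcases le_or_gt 0 p.2 with hp2 | hp2 <;> rcases le_or_gt 0 q.2 with hq2 | hq2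
  -- If both rows are non-negative, both arguments lie in `[0, π]`, and `p`, `q` are not opposite.
  · have hc : crossing p q = 0 := by unfold crossing; split_ifs <;> omega
    have ha := P0.2 hp2
    have hb := Q0.2 hq2
    have e1 : ¬ (a = 0 ∧ b = Real.pi) := by rw [Pz, Qp]; omega
    have e2 : ¬ (b = 0 ∧ a = Real.pi) := by rw [Qz, Pp]; omega
    refine key 0 hc ?_ ?_
    · by_contra hcon
      push_cast at hcon
      exact e2 ⟨by linarith, by linarith⟩
    · by_contra hcon
      push_cast at hcon
      exact e1 ⟨by linarith, by linarith⟩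
  · have hb : b < 0 := by rw [← not_le, Q0]; omega
    rcases lt_or_ge p.1 0 with h1 | h1
    · have hc : crossing p q = 1 := by unfold crossing; split_ifs <;> omega
      have ha : a = Real.pi := Pp.2 (by omega)
      refine key 1 hc ?_ ?_ <;> push_cast <;> linarith
    · have hc : crossing p q = 0 := by unfold crossing; split_ifs <;> omega
      have ha : a = 0 := Pz.2 (by omega)
      refine key 0 hc ?_ ?_ <;> push_cast <;> linarith
  · have ha : a < 0 := by rw [← not_le, P0]; omega
    rcases lt_or_ge q.1 0 with h1 | h1
    · have hc : crossing p q = -1 := by unfold crossing; split_ifs <;> omega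
      have hb : b = Real.pi := Qp.2 (by omega)
      refine key (-1) hc ?_ ?_ <;> push_cast <;> linarith
    · have hc : crossing p q = 0 := by unfold crossing; split_ifs <;> omega
      have hb : b = 0 := Qz.2 (by omega)
      refine key 0 hc ?_ ?_ <;> push_cast <;> linarith
  · have hc : crossing p q = 0 := by unfold crossing; split_ifs <;> omega
    have ha : a < 0 := by rw [← not_le, P0]; omega
    have hb : b < 0 := by rw [← not_le, Q0]; omega
    refine key 0 hc ?_ ?_ <;> push_cast <;> linarith

/-- Moving the base point from the origin to another site `w` of the box changes the crossing
numbers of `*`steps outside the box only by a coboundary: the potential is `±1` on the part of the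
left half-plane between rows `0` and `w.2`, and vanishes elsewhere. -/
lemma crossing_sub {N : ℤ} {w p q : Site} (hw : w ∈ box N) (hp : p ∉ box N)
    (hq : q ∉ box N) (h : adjStar p q) :
    crossing (p - w) (q - w) = crossing p q +
      ((if q.1 < 0 then (if q.2 < w.2 then 1 else 0) - (if q.2 < 0 then 1 else 0) else 0) -
       (if p.1 < 0 then (if p.2 < w.2 then 1 else 0) - (if p.2 < 0 then 1 else 0) else 0) : ℤ) := by
  obtain ⟨-, b1, b2, b3, b4⟩ := adjStar_bounds h
  rw [mem_box] at hw hp hq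
  obtain ⟨p1, p2⟩ := p
  obtain ⟨q1, q2⟩ := q
  obtain ⟨w1, w2⟩ := w
  simp only [crossing, Prod.mk_sub_mk] at *
  split_ifs <;> omega

/-- For every site `w` of the box there is a function `g` such that the angle at `w` swept by a
`*`step outside the box equals an increment of `g` plus `2π` times the crossing number of the step,
the latter not depending on `w`. -/
lemma exists_angle {N : ℤ} {w : Site} (hw : w ∈ box N) :
    ∃ g : Site → ℝ, ∀ p q : Site, p ∉ box N → q ∉ box N → adjStar p q →
      Complex.arg (toC (q - w) / toC (p - w)) = g q - g p + 2 * Real.pi * (crossing p q : ℤ) := by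
  refine ⟨fun p => Complex.arg (toC (p - w)) + 2 * Real.pi *
    ((if p.1 < 0 then (if p.2 < w.2 then 1 else 0) - (if p.2 < 0 then 1 else 0) else 0 : ℤ) : ℝ),
    fun p q hp hq h => ?_⟩
  have hpw : p - w ≠ 0 := fun h0 => hp (by rwa [sub_eq_zero.1 h0])
  have hqw : q - w ≠ 0 := fun h0 => hq (by rwa [sub_eq_zero.1 h0])
  have hadj : adjStar (p - w) (q - w) := by
    refine ⟨fun h0 => h.1 (sub_left_injective h0), ?_, ?_⟩
    · simpa using h.2.1
    · simpa using h.2.2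
  rw [arg_step hpw hqw hadj, crossing_sub hw hp hq h, Int.cast_add, Int.cast_sub]
  ring

/-! ### Occupied walks outside a finite set -/

/-- There is a `1*`path with `n` steps from `x` to `y`, all of whose sites lie outside `B`, with
total signed crossing number `k`. -/
def Walk (σ : Config) (B : Finset Site) : ℕ → Site → Site → ℤ → Prop
  | 0, x, y, k => x ∉ B ∧ σ x = true ∧ x = y ∧ k = 0
  | n + 1, x, y, k => x ∉ B ∧ σ x = true ∧
      ∃ z, adjStar x z ∧ Walk σ B n z y (k - crossing x z)

/-- The sites `x` and `y` are joined by a `1*`path outside `B`. -/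
def Reach (σ : Config) (B : Finset Site) (x y : Site) : Prop := ∃ n k, Walk σ B n x y k

section Walks

variable {σ : Config} {B : Finset Site}

lemma Walk.start {n : ℕ} {x y : Site} {k : ℤ} (h : Walk σ B n x y k) : x ∉ B ∧ σ x = true := by
  cases n with
  | zero => exact ⟨h.1, h.2.1⟩
  | succ n => exact ⟨h.1, h.2.1⟩

lemma Walk.trans {n m : ℕ} {x y z : Site} {k l : ℤ} (h : Walk σ B n x y k)
    (h' : Walk σ B m y z l) : Walk σ B (n + m) x z (k + l) := by
  induction n generalizing x k with
  | zero =>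
    obtain ⟨-, -, rfl, rfl⟩ := h
    simpa using h'
  | succ n ih =>
    obtain ⟨h1, h2, u, hu, h3⟩ := h
    rw [Nat.succ_add]
    refine ⟨h1, h2, u, hu, ?_⟩
    have := ih h3
    rwa [show k + l - crossing x u = k - crossing x u + l by ring]

lemma Walk.single {x y : Site} (h : adjStar x y) (hx : x ∉ B) (hy : y ∉ B) (sx : σ x = true)
    (sy : σ y = true) : Walk σ B 1 x y (crossing x y) :=
  ⟨hx, sx, y, h, hy, sy, rfl, by ring⟩

lemma Walk.symm {n : ℕ} {x y : Site} {k : ℤ} (h : Walk σ B n x y k) :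
    Walk σ B n y x (-k) := by
  induction n generalizing x k with
  | zero =>
    obtain ⟨h1, h2, rfl, rfl⟩ := h
    exact ⟨h1, h2, rfl, by simp⟩
  | succ n ih =>
    obtain ⟨h1, h2, u, hu, h3⟩ := h
    have h4 := (ih h3).trans
      (Walk.single (adjStar_symm hu) h3.start.1 h1 h3.start.2 h2)
    rw [crossing_symm x u] at h4
    rwa [show -(k - crossing x u) + -crossing x u = -k by ring] at h4

lemma Reach.symm {x y : Site} (h : Reach σ B x y) : Reach σ B y x := by
  obtain ⟨n, k, h⟩ := h
  exact ⟨n, -k, h.symm⟩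

lemma Reach.trans {x y z : Site} (h : Reach σ B x y) (h' : Reach σ B y z) : Reach σ B x z := by
  obtain ⟨n, k, h⟩ := h
  obtain ⟨m, l, h'⟩ := h'
  exact ⟨_, _, h.trans h'⟩

lemma Reach.start {x y : Site} (h : Reach σ B x y) : x ∉ B ∧ σ x = true := by
  obtain ⟨n, k, h⟩ := h
  exact h.start

lemma Reach.finish {x y : Site} (h : Reach σ B x y) : y ∉ B ∧ σ y = true := h.symm.start

lemma Reach.refl {x : Site} (hx : x ∉ B) (sx : σ x = true) : Reach σ B x x :=
  ⟨0, 0, hx, sx, rfl, rfl⟩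

lemma Reach.step {x y : Site} (h : adjStar x y) (hx : x ∉ B) (hy : y ∉ B) (sx : σ x = true)
    (sy : σ y = true) : Reach σ B x y := ⟨_, _, Walk.single h hx hy sx sy⟩

lemma Walk.mono {τ : Config} (hστ : σ ≤ τ) {n : ℕ} {x y : Site} {k : ℤ}
    (h : Walk σ B n x y k) : Walk τ B n x y k := by
  have key : ∀ z, σ z = true → τ z = true := fun z hz => by
    have := hστ z
    rw [hz] at this
    exact top_le_iff.1 this
  induction n generalizing x k with
  | zero => exact ⟨h.1, key _ h.2.1, h.2.2⟩
  | succ n ih =>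
    obtain ⟨h1, h2, u, hu, h3⟩ := h
    exact ⟨h1, key _ h2, u, hu, ih h3⟩

/-- The list of sites visited by a walk, with the final site `y` split off so that closed walks
give circuits directly. The last clause evaluates sums of angles along the walk. -/
lemma Walk.exists_list {n : ℕ} {x y : Site} {k : ℤ} (h : Walk σ B n x y k) :
    ∃ C : List Site, C.length = n ∧ (C ++ [y]).IsChain adjStar ∧ (C ++ [y]).head? = some x ∧
      (∀ z ∈ C ++ [y], z ∉ B ∧ σ z = true ∧ Reach σ B x z) ∧
      ∀ (w : Site) (g : Site → ℝ), (∀ p q : Site, p ∉ B → q ∉ B → adjStar p q →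
        Complex.arg (toC (q - w) / toC (p - w)) = g q - g p + 2 * Real.pi * (crossing p q : ℤ)) →
        windingAround (C ++ [y]) w = (1 / (2 * Real.pi)) * (g y - g x + 2 * Real.pi * k) := by
  induction n generalizing x k with
  | zero =>
    obtain ⟨h1, h2, rfl, rfl⟩ := h
    refine ⟨[], rfl, by simp, by simp, ?_, ?_⟩
    · intro z hz
      simp only [List.nil_append, List.mem_singleton] at hz
      subst hz
      exact ⟨h1, h2, Reach.refl h1 h2⟩
    · intro w g _
      simp [windingAround, winding]
  | succ n ih =>
    obtain ⟨h1, h2, u, hu, h3⟩ := h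
    obtain ⟨C, c1, c2, c3, c4, c5⟩ := ih h3
    have hstep := Reach.step hu h1 h3.start.1 h2 h3.start.2
    refine ⟨x :: C, by simp [c1], ?_, by simp, ?_, ?_⟩
    · rw [List.cons_append, List.isChain_cons]
      refine ⟨fun z hz => ?_, c2⟩
      rw [c3] at hz
      cases hz
      exact hu
    · intro z hz
      rw [List.cons_append, List.mem_cons] at hz
      rcases hz with rfl | hz
      · exact ⟨h1, h2, Reach.refl h1 h2⟩
      · obtain ⟨d1, d2, d3⟩ := c4 z hz
        exact ⟨d1, d2, hstep.trans d3⟩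
    · intro w g hg
      have c6 := c5 w g hg
      rw [List.cons_append]
      generalize C ++ [y] = D at c3 c6
      cases D with
      | nil => simp at c3
      | cons v D =>
        simp only [List.head?_cons, Option.some.injEq] at c3
        subst c3
        simp only [windingAround, winding, List.map_cons, List.tail_cons, List.zip_cons_cons,
          List.sum_cons, mul_add, Int.cast_sub] at c6 ⊢
        rw [c6, hg x v h1 h3.start.1 hu]
        ring

/-- A closed walk outside the box with non-zero total crossing number is a circuit around the
box. -/
lemma Walk.circuit {N : ℤ} {n : ℕ} {x : Site} {k : ℤ} (h : Walk σ (box N) n x x k)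
    (hk : k ≠ 0) : ∃ C : List Site, Is1StarCircuit σ C ∧ CircuitAround C ↑(box N) := by
  obtain ⟨C, c1, c2, c3, c4, c5⟩ := h.exists_list
  cases C with
  | nil =>
    simp only [List.length_nil] at c1
    subst c1
    exact absurd h.2.2.2 hk
  | cons v C =>
    simp only [List.cons_append, List.head?_cons, Option.some.injEq] at c3
    subst c3
    have hmem : ∀ z ∈ v :: C, z ∉ box N ∧ σ z = true := fun z hz =>
      ⟨(c4 z (List.mem_append_left _ hz)).1, (c4 z (List.mem_append_left _ hz)).2.1⟩
    rw [List.isChain_append] at c2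
    refine ⟨v :: C, ⟨⟨c2.1, by simp, ?_⟩, fun z hz => (hmem z hz).2⟩, fun w hw => ⟨?_, ?_⟩⟩
    · exact c2.2.2 _ (by rw [List.getLast?_eq_some_getLast (by simp)]; rfl) _ rfl
    · exact fun hwC => (hmem w hwC).1 hw
    · obtain ⟨g, hg⟩ := exists_angle (Finset.mem_coe.1 hw)
      rw [show (v :: C).take 1 = [v] by simp, c5 w g hg]
      have hpi := Real.pi_pos
      have : (k : ℝ) ≠ 0 := by exact_mod_cast hk
      rw [sub_self, zero_add]
      positivity

end Walks

/-! ### Infinite clusters -/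

/-- If all spins in `B` vanish, the sites reachable from an occupied site outside `B` form a
`1*`cluster. -/
lemma isCluster1_reach {σ : Config} {B : Finset Site} (hB : ∀ z ∈ B, σ z = false) {x : Site}
    (hx : x ∉ B) (sx : σ x = true) : IsCluster1 σ {y | Reach σ B x y} := by
  refine ⟨⟨x, Reach.refl hx sx⟩, fun z hz => Reach.finish hz |>.2, ?_, ?_⟩
  · intro a ha b hb
    obtain ⟨n, k, h⟩ := (Reach.symm ha).trans hb
    obtain ⟨C, -, c2, c3, c4, -⟩ := h.exists_list
    exact ⟨C ++ [b], c2, fun z hz => Reach.trans ha (c4 z hz).2.2, c3, by simp⟩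
  · intro a ha y hay sy
    have hy : y ∉ B := fun h => by simp [hB y h] at sy
    exact Reach.trans ha (Reach.step hay (Reach.finish ha).1 hy (Reach.finish ha).2 sy)

lemma reach_of_chain {σ : Config} {S : Set Site} (hS : ∀ z ∈ S, σ z = true) {y : Site} :
    ∀ (P : List Site) (x : Site), P.IsChain adjStar → (∀ z ∈ P, z ∈ S) → P.head? = some x →
      P.getLast? = some y → Reach σ ∅ x y := by
  intro P
  induction P with
  | nil => intro x _ _ h; simp at h
  | cons a P ih =>
    intro x hc hP hh hl
    simp only [List.head?_cons, Option.some.injEq] at hh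
    subst hh
    have ha := hS a (hP a (by simp))
    cases P with
    | nil =>
      simp only [List.getLast?_singleton, Option.some.injEq] at hl
      subst hl
      exact Reach.refl (by simp) ha
    | cons b P =>
      rw [List.isChain_cons_cons] at hc
      refine (Reach.step hc.1 (by simp) (by simp) ha (hS b (hP b (by simp)))).trans
        (ih b hc.2 (fun z hz => hP z (List.mem_cons_of_mem _ hz)) rfl ?_)
      rwa [List.getLast?_cons_cons] at hl

lemma inInfinite1_iff {σ : Config} {x : Site} :
    InInfinite1 σ x ↔ {y | Reach σ ∅ x y}.Infinite := by
  constructor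
  · rintro ⟨S, hS, hinf, hx⟩
    refine hinf.mono fun y hy => ?_
    obtain ⟨P, h1, h2, h3, h4⟩ := hS.2.2.1 x hx y hy
    exact reach_of_chain hS.2.1 P x h1 h2 h3 h4
  · intro h
    obtain ⟨y, hy⟩ := h.nonempty
    obtain ⟨hx, sx⟩ := Reach.start hy
    exact ⟨_, isCluster1_reach (by simp) hx sx, h, Reach.refl hx sx⟩

/-- The sites of an infinite `1*`cluster whose component outside `B` is finite. -/
def Bad (B : Finset Site) (σ : Config) : Set Site :=
  {x | InInfinite1 σ x ∧ {y | Reach σ B x y}.Finite}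

lemma finite_adjStar (z : Site) : {y | adjStar y z}.Finite := by
  refine (Set.finite_Icc (z - (1, 1)) (z + (1, 1))).subset fun y hy => ?_
  obtain ⟨-, b1, b2, b3, b4⟩ := adjStar_bounds hy
  rw [Set.mem_Icc, Prod.le_def, Prod.le_def]
  simp only [Prod.fst_sub, Prod.snd_sub, Prod.fst_add, Prod.snd_add]
  omega

/-- A path that leaves the component of `x` outside `B` passes through a `*`neighbour of `B`
belonging to that component. -/
lemma Walk.exists_exit {σ : Config} {B : Finset Site} {n : ℕ} {x y : Site} {k : ℤ}
    (h : Walk σ ∅ n x y k) (hx : x ∉ B) (hy : ¬ Reach σ B x y) :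
    ∃ z, Reach σ B x z ∧ ∃ b ∈ B, adjStar z b := by
  induction n generalizing x k with
  | zero =>
    obtain ⟨-, sx, rfl, -⟩ := h
    exact absurd (Reach.refl hx sx) hy
  | succ n ih =>
    obtain ⟨-, sx, u, hu, h3⟩ := h
    by_cases huB : u ∈ B
    · exact ⟨x, Reach.refl hx sx, u, huB, hu⟩
    · have hxu := Reach.step hu hx huB sx h3.start.2
      obtain ⟨z, hz, hb⟩ := ih h3 huB fun h => hy (hxu.trans h)
      exact ⟨z, hxu.trans hz, hb⟩

/-- Deleting a finite set from the infinite `1*`clusters leaves only finitely many sites in finite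
components, since each finite component contains a `*`neighbour of the deleted set. -/
lemma bad_finite (B : Finset Site) (σ : Config) : (Bad B σ).Finite := by
  have hN : (⋃ b ∈ B, {z | adjStar z b}).Finite :=
    B.finite_toSet.biUnion fun b _ => finite_adjStar b
  have hF : (⋃ z ∈ {z | z ∈ ⋃ b ∈ B, {z | adjStar z b} ∧ {y | Reach σ B z y}.Finite},
      {y | Reach σ B z y}).Finite :=
    (hN.subset fun z hz => hz.1).biUnion fun z hz => hz.2
  refine (B.finite_toSet.union hF).subset fun x hx => ?_
  by_cases hxB : x ∈ B
  · exact Or.inl hxB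
  right
  obtain ⟨h1, h2⟩ := hx
  rw [inInfinite1_iff] at h1
  obtain ⟨y, hy, hy'⟩ := h1.exists_notMem_finite h2
  obtain ⟨n, k, hw⟩ := hy
  obtain ⟨z, hz, b, hb, hzb⟩ := hw.exists_exit hxB hy'
  simp only [Set.mem_iUnion, Set.mem_ofPred_eq]
  exact ⟨z, ⟨⟨b, hb, hzb⟩, h2.subset fun y hy => hz.trans hy⟩, hz.symm⟩

/-! ### Measurability -/

section Measurability

variable {m : MeasurableSpace Config} {B : Finset Site}

lemma measurableSet_walk (hm : ∀ z ∉ B, MeasurableSet[m] {σ : Config | σ z = true}) (n : ℕ)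
    (x y : Site) (k : ℤ) : MeasurableSet[m] {σ : Config | Walk σ B n x y k} := by
  induction n generalizing x k with
  | zero =>
    by_cases h : x ∉ B ∧ x = y ∧ k = 0
    · have : {σ : Config | Walk σ B 0 x y k} = {σ | σ x = true} := by
        ext σ
        simp only [Walk, Set.mem_ofPred_eq]
        tauto
      rw [this]
      exact hm x h.1
    · have : {σ : Config | Walk σ B 0 x y k} = ∅ := by
        ext σ
        simp only [Walk, Set.mem_ofPred_eq, Set.mem_empty_iff_false]
        tauto
      rw [this]
      exact MeasurableSet.empty
  | succ n ih =>
    by_cases h : x ∉ B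
    · have : {σ : Config | Walk σ B (n + 1) x y k} = {σ | σ x = true} ∩
          ⋃ z, ⋃ _ : adjStar x z, {σ | Walk σ B n z y (k - crossing x z)} := by
        ext σ
        simp only [Walk, Set.mem_ofPred_eq, Set.mem_inter_iff, Set.mem_iUnion, exists_prop]
        tauto
      rw [this]
      exact (hm x h).inter
        (MeasurableSet.iUnion fun z => MeasurableSet.iUnion fun _ => ih z _)
    · have : {σ : Config | Walk σ B (n + 1) x y k} = ∅ := by
        ext σ
        simp only [Walk, Set.mem_ofPred_eq, Set.mem_empty_iff_false]
        tauto
      rw [this]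
      exact MeasurableSet.empty

lemma measurableSet_reach (hm : ∀ z ∉ B, MeasurableSet[m] {σ : Config | σ z = true})
    (x y : Site) : MeasurableSet[m] {σ : Config | Reach σ B x y} := by
  have : {σ : Config | Reach σ B x y} = ⋃ n, ⋃ k, {σ | Walk σ B n x y k} := by
    ext σ
    simp [Reach]
  rw [this]
  exact MeasurableSet.iUnion fun n => MeasurableSet.iUnion fun k => measurableSet_walk hm n x y k

lemma measurableSet_reach_infinite
    (hm : ∀ z ∉ B, MeasurableSet[m] {σ : Config | σ z = true}) (x : Site) :
    MeasurableSet[m] {σ : Config | {y | Reach σ B x y}.Infinite} := by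
  have : {σ : Config | {y | Reach σ B x y}.Infinite} =
      ⋂ F : Finset Site, ⋃ y, ⋃ _ : y ∉ F, {σ | Reach σ B x y} := by
    ext σ
    simp only [Set.mem_ofPred_eq, Set.mem_iInter, Set.mem_iUnion, exists_prop]
    constructor
    · intro h F
      obtain ⟨y, hy, hF⟩ := h.exists_notMem_finset F
      exact ⟨y, hF, hy⟩
    · intro h hfin
      obtain ⟨y, hy, hy'⟩ := h hfin.toFinset
      exact hy (by simpa using hy')
  rw [this]
  exact MeasurableSet.iInter fun F => MeasurableSet.iUnion fun y =>
    MeasurableSet.iUnion fun _ => measurableSet_reach hm x y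

end Measurability

lemma measurableSet_spin (z : Site) : MeasurableSet {σ : Config | σ z = true} :=
  (measurable_pi_apply (X := fun _ : Site => Bool) z) (measurableSet_singleton true)

lemma measurableSet_spin_outside {B : Finset Site} (z : Site) (hz : z ∉ B) :
    MeasurableSet[outsideAlgebra B] {σ : Config | σ z = true} :=
  ⟨(fun τ : {z : Site // z ∉ B} → Bool => τ ⟨z, hz⟩) ⁻¹' {true},
    (measurable_pi_apply _) (measurableSet_singleton true), rfl⟩

lemma measurableSet_inInfinite1 (x : Site) : MeasurableSet {σ : Config | InInfinite1 σ x} := by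
  simp only [inInfinite1_iff]
  exact measurableSet_reach_infinite (fun z _ => measurableSet_spin z) x

/-! ### Probabilistic estimates -/

section Probability

variable {μ : Measure Config}

/-- Almost surely the infinite `1*`cluster has at most one infinite component outside `B`:
otherwise, by bounded energy, the spins in `B` could be switched to `0` with positive conditional
probability, which would create two infinite `1*`clusters. -/
lemma ae_unique_outside (hbe : BoundedEnergy μ) (h1 : ∀ᵐ σ ∂μ, AtMostOneInfinite1 σ)
    (B : Finset Site) : ∀ᵐ σ ∂μ, ∀ x y : Site, {z | Reach σ B x z}.Infinite →
      {z | Reach σ B y z}.Infinite → Reach σ B x y := by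
  rw [ae_all_iff]
  intro x
  rw [ae_all_iff]
  intro y
  set D : Set Config := ({σ | {z | Reach σ B x z}.Infinite} ∩
    {σ | {z | Reach σ B y z}.Infinite}) ∩ {σ | Reach σ B x y}ᶜ with hD
  have hDm : MeasurableSet[outsideAlgebra B] D := by
    refine MeasurableSet.inter (MeasurableSet.inter ?_ ?_) (MeasurableSet.compl ?_)
    · exact measurableSet_reach_infinite measurableSet_spin_outside x
    · exact measurableSet_reach_infinite measurableSet_spin_outside y
    · exact measurableSet_reach measurableSet_spin_outside x y
  obtain ⟨e, he, hE⟩ := hbe B.card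
  have h2 := hE B rfl (fun _ => false) D hDm
  have h3 : μ (cylEvent B (fun _ => false) ∩ D) = 0 := by
    refine measure_mono_null ?_ (ae_iff.1 h1)
    rintro σ ⟨hB, ⟨hx, hy⟩, hxy⟩ hu
    have sx := Reach.start hx.nonempty.some_mem
    have sy := Reach.start hy.nonempty.some_mem
    have heq := hu _ _ (isCluster1_reach hB sx.1 sx.2) hx (isCluster1_reach hB sy.1 sy.2) hy
    have : y ∈ {z | Reach σ B y z} := Reach.refl sy.1 sy.2
    rw [← heq] at this
    exact hxy this
  rw [h3, nonpos_iff_eq_zero, mul_eq_zero] at h2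
  have h4 : μ D = 0 := h2.resolve_left he.ne'
  refine measure_mono_null ?_ h4
  intro σ hσ
  by_contra hc
  apply hσ
  intro hx hy
  by_contra hxy
  exact hc ⟨⟨hx, hy⟩, hxy⟩

/-- Outside a sufficiently large box there are, with high probability, no sites of infinite
`1*`clusters whose component outside `B` is finite. -/
lemma exists_box_bad [IsProbabilityMeasure μ] (B : Finset Site) {ε : ℝ≥0∞} (hε : 0 < ε) :
    ∃ M : ℕ, μ {σ | ∃ x ∉ box M, x ∈ Bad B σ} ≤ ε := by
  set E : ℕ → Set Config := fun M => {σ | ∃ x ∉ box (M : ℤ), x ∈ Bad B σ} with hE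
  have hm : ∀ M, MeasurableSet (E M) := by
    intro M
    have : E M = ⋃ x, ⋃ _ : x ∉ box (M : ℤ),
        {σ : Config | InInfinite1 σ x} ∩ {σ | {y | Reach σ B x y}.Infinite}ᶜ := by
      ext σ
      simp only [hE, Bad, Set.mem_ofPred_eq, Set.mem_iUnion, Set.mem_inter_iff, Set.mem_compl_iff,
        Set.not_infinite, exists_prop]
    rw [this]
    exact MeasurableSet.iUnion fun x => MeasurableSet.iUnion fun _ =>
      (measurableSet_inInfinite1 x).inter
        (measurableSet_reach_infinite (fun z _ => measurableSet_spin z) x).compl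
  have hanti : Antitone E := by
    intro M M' hMM σ hσ
    obtain ⟨x, hx, hb⟩ := hσ
    refine ⟨x, fun h => hx ?_, hb⟩
    rw [mem_box] at h ⊢
    omega
  have hempty : ⋂ M, E M = ∅ := by
    refine Set.eq_empty_of_forall_notMem fun σ hσ => ?_
    obtain ⟨R, hR⟩ := ((bad_finite B σ).image
      (fun x : Site => x.1.natAbs + x.2.natAbs)).bddAbove
    obtain ⟨x, hx, hb⟩ := Set.mem_iInter.1 hσ R
    have := hR ⟨x, hb, rfl⟩
    simp only at this
    rw [mem_box] at hx
    omega
  have ht := tendsto_measure_iInter_atTop (μ := μ) (fun M => (hm M).nullMeasurableSet) hanti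
    ⟨0, measure_ne_top μ _⟩
  rw [hempty, measure_empty] at ht
  obtain ⟨M, hM⟩ := (ht.eventually (gt_mem_nhds hε)).exists
  exact ⟨M, hM.le⟩

/-- Sites outside a large box are joined by a `1*`path avoiding `B` with probability at least
`2d`, if `4d ≤ c²`. -/
lemma exists_box_reach [IsProbabilityMeasure μ] (hpa : PositivelyAssociated μ)
    (hbe : BoundedEnergy μ) (h1 : ∀ᵐ σ ∂μ, AtMostOneInfinite1 σ) {c d : ℝ≥0∞}
    (hlb : ∀ x : Site, c ≤ μ {σ | InInfinite1 σ x}) (hd : 0 < d) (hcd : (d + d) + (d + d) ≤ c * c)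
    (hd' : d ≠ ⊤) (B : Finset Site) :
    ∃ M : ℕ, ∀ x ∉ box M, ∀ y ∉ box M, d + d ≤ μ {σ | Reach σ B x y} := by
  obtain ⟨M, hM⟩ := exists_box_bad (μ := μ) B (ε := d + d) (by positivity)
  refine ⟨M, fun x hx y hy => ?_⟩
  have hinc : ∀ z, IncreasingEvent {σ | InInfinite1 σ z} := by
    intro z ξ η hξ hle
    simp only [Set.mem_ofPred_eq, inInfinite1_iff] at hξ ⊢
    refine hξ.mono ?_
    rintro u ⟨n, k, h⟩
    exact ⟨n, k, h.mono hle⟩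
  have h2 : c * c ≤ μ ({σ | InInfinite1 σ x} ∩ {σ | InInfinite1 σ y}) :=
    (mul_le_mul' (hlb x) (hlb y)).trans (hpa _ _ (measurableSet_inInfinite1 x)
      (measurableSet_inInfinite1 y) (hinc x) (hinc y))
  have h3 : μ ({σ | InInfinite1 σ x} ∩ {σ | InInfinite1 σ y}) ≤
      μ ({σ | Reach σ B x y} ∪ {σ | ∃ x ∉ box M, x ∈ Bad B σ}) := by
    refine measure_mono_ae ?_
    filter_upwards [ae_unique_outside hbe h1 B] with σ hσ
    rintro ⟨ix, iy⟩
    by_cases hb : ∃ x ∉ box M, x ∈ Bad B σ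
    · exact Or.inr hb
    · push Not at hb
      exact Or.inl (hσ x y (fun hf => hb x hx ⟨ix, hf⟩) fun hf => hb y hy ⟨iy, hf⟩)
  have h4 := (hcd.trans (h2.trans h3)).trans ((measure_union_le _ _).trans (add_le_add_right hM _))
  exact (ENNReal.add_le_add_iff_right (by finiteness)).1 h4

end Probability

/-! ### Transport around the box without crossing the cut -/

/-- A property of sites propagates along straight lines. -/
lemma transport_line {T : Site → Prop} {R : Site → Site → Prop}
    (hT : ∀ p q, R p q → T p → T q) (p v : Site) (n : ℕ)
    (hR : ∀ i : ℕ, i < n → R (p + i • v) (p + (i + 1) • v)) (hp : T p) : T (p + n • v) := by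
  induction n with
  | zero => simpa using hp
  | succ n ih => exact hT _ _ (hR n n.lt_succ_self) (ih fun i hi => hR i (by omega))

/-- A property preserved by all `*`steps outside `box M` with zero crossing number propagates
from `(-K, -1)` to `(-K, 0)`, where `K = M + 1`: the path goes around `box M` along the boundary of
`box K` and thus avoids the cut between these two sites. -/
lemma transport_ring {T : Site → Prop} (M : ℕ)
    (hT : ∀ p q : Site, p ∉ box M → q ∉ box M → adjStar p q → crossing p q = 0 → T p → T q)
    (h : T (-(M + 1), -1)) : T (-(M + 1), 0) := by
  set R : Site → Site → Prop := fun p q => p ∉ box M ∧ q ∉ box M ∧ adjStar p q ∧ crossing p q = 0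
  have hT' : ∀ p q, R p q → T p → T q := fun p q h => hT p q h.1 h.2.1 h.2.2.1 h.2.2.2
  have hR : ∀ a b c d : ℤ, (a = c ∧ (b = d + 1 ∨ d = b + 1) ∨ b = d ∧ (a = c + 1 ∨ c = a + 1)) →
      (a < -M ∨ M < a ∨ b < -M ∨ M < b) → (c < -M ∨ M < c ∨ d < -M ∨ M < d) →
      (0 < b ∨ b < -1 ∨ 0 ≤ a ∨ (b = -1 ∧ d < 0) ∨ (b = 0 ∧ 0 ≤ d)) → R (a, b) (c, d) := by
    intro a b c d h1 h2 h3 h4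
    refine ⟨?_, ?_, ⟨?_, ?_, ?_⟩, ?_⟩
    · rw [mem_box]; simp only; omega
    · rw [mem_box]; simp only; omega
    · intro h
      rw [Prod.mk.injEq] at h
      omega
    · rw [abs_le]; simp only; omega
    · rw [abs_le]; simp only; omega
    · unfold crossing; simp only; split_ifs <;> omega
  have hsm : ∀ (i : ℕ) (a b : ℤ), (i • (a, b) : Site) = (i * a, i * b) := by
    intro i a b
    simp [Prod.smul_mk]
  have line : ∀ (a b u v : ℤ) (n : ℕ) (a' b' : ℤ), a' = a + n * u → b' = b + n * v →
      (∀ i : ℕ, i < n → R (a + i * u, b + i * v) (a + (i + 1) * u, b + (i + 1) * v)) →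
      T (a, b) → T (a', b') := by
    intro a b u v n a' b' ha hb hi ht
    have := transport_line hT' (a, b) (u, v) n (fun i hin => by
      have := hi i hin
      simpa [hsm] using this) ht
    rw [hsm] at this
    rw [ha, hb]
    exact this
  have t1 : T (-(M + 1), -(M + 1)) :=
    line _ _ 0 (-1) M _ _ (by ring) (by ring) (fun i hi => hR _ _ _ _ (by omega) (by omega)
      (by omega) (by omega)) h
  have t2 : T (M + 1, -(M + 1)) :=
    line _ _ 1 0 (2 * M + 2) _ _ (by push_cast; ring) (by ring) (fun i hi => hR _ _ _ _ (by omega)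
      (by omega) (by omega) (by omega)) t1
  have t3 : T (M + 1, M + 1) :=
    line _ _ 0 1 (2 * M + 2) _ _ (by ring) (by push_cast; ring) (fun i hi => hR _ _ _ _ (by omega)
      (by omega) (by omega) (by omega)) t2
  have t4 : T (-(M + 1), M + 1) :=
    line _ _ (-1) 0 (2 * M + 2) _ _ (by push_cast; ring) (by ring) (fun i hi => hR _ _ _ _
      (by omega) (by omega) (by omega) (by omega)) t3
  exact line _ _ 0 (-1) (M + 1) _ _ (by ring) (by push_cast; ring) (fun i hi => hR _ _ _ _
    (by omega) (by omega) (by omega) (by omega)) t4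

/-! ### Circuits around large boxes -/

section Circuits

variable {μ : Measure Config}

/-- The event that some walk from `x` to `y` outside `B` has total crossing number in `K`. -/
def WalkEvent (B : Finset Site) (x y : Site) (K : Set ℤ) : Set Config :=
  {σ | ∃ k ∈ K, ∃ n, Walk σ B n x y k}

lemma measurableSet_walkEvent (B : Finset Site) (x y : Site) (K : Set ℤ) :
    MeasurableSet (WalkEvent B x y K) := by
  have : WalkEvent B x y K = ⋃ k, ⋃ _ : k ∈ K, ⋃ n, {σ | Walk σ B n x y k} := by
    ext σ
    simp [WalkEvent]
  rw [this]
  exact MeasurableSet.iUnion fun k => MeasurableSet.iUnion fun _ => MeasurableSet.iUnion fun n =>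
    measurableSet_walk (fun z _ => measurableSet_spin z) n x y k

lemma increasing_walkEvent (B : Finset Site) (x y : Site) (K : Set ℤ) :
    IncreasingEvent (WalkEvent B x y K) := by
  rintro ξ η ⟨k, hk, n, h⟩ hle
  exact ⟨k, hk, n, h.mono hle⟩

/-- If remote sites are joined outside the box `box N` with probability at least `2d`, then a
`1*`circuit around `box N` exists with probability at least `d²`. -/
lemma circuit_of_reach [IsProbabilityMeasure μ] (hpa : PositivelyAssociated μ) {d : ℝ≥0∞}
    (N M : ℕ) (hNM : N ≤ M) (hd : ∀ x ∉ box M, ∀ y ∉ box M, d + d ≤ μ {σ | Reach σ (box N) x y}) :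
    d * d ≤ μ {σ | ∃ C : List Site, Is1StarCircuit σ C ∧ CircuitAround C ↑(box N)} := by
  set E : Set Config := {σ | ∃ C : List Site, Is1StarCircuit σ C ∧ CircuitAround C ↑(box N)} with hE
  by_contra hcon
  have hsub : ∀ p, p ∉ box (M : ℤ) → p ∉ box (N : ℤ) := by
    intro p hp h
    apply hp
    rw [mem_box] at h ⊢
    omega
  set x₀ : Site := (-(M + 1), -1) with hx₀
  set y₀ : Site := (-(M + 1), 0) with hy₀
  have hx₀M : x₀ ∉ box M := by rw [mem_box, hx₀]; simp only; omega
  have hy₀M : y₀ ∉ box M := by rw [mem_box, hy₀]; simp only; omega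
  -- Walks from `x₀` are classified by the sign of the crossing number; one class is likely.
  have hsplit : ∀ y ∉ box (M : ℤ), d ≤ μ (WalkEvent (box N) x₀ y (Set.Ici 0)) ∨
      d ≤ μ (WalkEvent (box N) x₀ y (Set.Iic (-1))) := by
    intro y hy
    by_contra! hlt
    refine (ENNReal.add_lt_add hlt.1 hlt.2).not_ge (((hd x₀ hx₀M y hy).trans
      (measure_mono ?_)).trans (measure_union_le _ _))
    rintro σ ⟨n, k, h⟩
    rcases le_or_gt 0 k with hk | hk
    · exact Or.inl ⟨k, hk, n, h⟩
    · exact Or.inr ⟨k, by simp only [Set.mem_Iic]; omega, n, h⟩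
  -- An event contained in `E` has probability less than `d`, because `d² ≤ d`.
  have hsmall : ∀ F : Set Config, F ⊆ E → ¬ d ≤ μ F := by
    intro F hF hdF
    apply hcon
    have hd1 : d ≤ 1 := hdF.trans prob_le_one
    calc d * d ≤ d * 1 := by gcongr
      _ = d := mul_one d
      _ ≤ μ F := hdF
      _ ≤ μ E := measure_mono hF
  have hstart : d ≤ μ (WalkEvent (box N) x₀ x₀ (Set.Ici 0)) := by
    refine (hsplit x₀ hx₀M).resolve_right (hsmall _ ?_)
    rintro σ ⟨k, hk, n, h⟩
    exact h.circuit (by simp only [Set.mem_Iic] at hk; omega)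
  have hend : d ≤ μ (WalkEvent (box N) x₀ y₀ (Set.Ici 0)) := by
    refine transport_ring (T := fun y => d ≤ μ (WalkEvent (box N) x₀ y (Set.Ici 0))) M ?_ hstart
    intro p q hp hq hpq hc hTp
    refine (hsplit q hq).resolve_right fun hTq => hcon ?_
    refine ((mul_le_mul' hTp hTq).trans (hpa _ _ (measurableSet_walkEvent _ _ _ _)
      (measurableSet_walkEvent _ _ _ _) (increasing_walkEvent _ _ _ _)
      (increasing_walkEvent _ _ _ _))).trans (measure_mono ?_)
    -- The walks from `x₀` to the adjacent sites `p` and `q` close up to a circuit.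
    rintro σ ⟨⟨k, hk, n, h⟩, l, hl, m, h'⟩
    have hs := Walk.single hpq (hsub p hp) (hsub q hq) h.symm.start.2 h'.symm.start.2
    rw [hc] at hs
    refine ((h.trans hs).trans h'.symm).circuit ?_
    simp only [Set.mem_Ici, Set.mem_Iic] at hk hl
    omega
  refine hsmall _ ?_ hend
  -- The step from `y₀` to `x₀` crosses the cut downwards and closes the circuit.
  rintro σ ⟨k, hk, n, h⟩
  have hadj : adjStar y₀ x₀ := by
    refine ⟨?_, ?_, ?_⟩
    · simp [hx₀, hy₀]
    · simp [hx₀, hy₀]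
    · simp [hx₀, hy₀]
  have hc : crossing y₀ x₀ = 1 := by
    have hneg : -((M : ℤ) + 1) < 0 := by omega
    exact if_pos ⟨rfl, rfl, hneg⟩
  have hs := Walk.single hadj (hsub _ hy₀M) (hsub _ hx₀M) h.symm.start.2 h.start.2
  rw [hc] at hs
  refine (h.trans hs).circuit ?_
  simp only [Set.mem_Ici] at hk
  omega

end Circuits

/-- Under the hypotheses of Theorem 1, for every finite `Δ` containing the origin a
`1*`circuit around `Δ` exists with probability at least `c⁴/16`. -/
theorem statement14 (μ : Measure Config) [IsProbabilityMeasure μ]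
    (hpa : PositivelyAssociated μ) (hbe : BoundedEnergy μ)
    (h0 : ∀ᵐ σ ∂μ, UniqueInfinite0 σ) (h1 : ∀ᵐ σ ∂μ, AtMostOneInfinite1 σ)
    (c : ℝ≥0∞) (hc : 0 < c) (hlb : ∀ x : Site, c ≤ μ {σ | InInfinite1 σ x})
    (Δ : Finset Site) (hΔ : ((0 : ℤ), (0 : ℤ)) ∈ Δ) :
    c ^ 4 / 16 ≤ μ {σ | ∃ C : List Site, Is1StarCircuit σ C ∧ CircuitAround C ↑Δ} := by
  obtain ⟨R, hR⟩ := (Δ.finite_toSet.image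
    (fun x : Site => x.1.natAbs + x.2.natAbs)).bddAbove
  have hΔR : (Δ : Set Site) ⊆ box (R : ℤ) := by
    intro x hx
    have := hR ⟨x, hx, rfl⟩
    simp only at this
    rw [Finset.mem_coe, mem_box]
    omega
  have hctop : c ≠ ⊤ := ((hlb (0, 0)).trans_lt (measure_lt_top μ _)).ne
  set d : ℝ≥0∞ := c ^ 2 / 4 with hd
  have hd0 : 0 < d := ENNReal.div_pos (pow_ne_zero 2 hc.ne') (by norm_num)
  have hdtop : d ≠ ⊤ := ENNReal.div_ne_top (by finiteness) (by norm_num)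
  have hcd : (d + d) + (d + d) = c * c := by
    rw [show (d + d) + (d + d) = d * 4 by ring, hd, ENNReal.div_mul_cancel (by norm_num)
      (by norm_num), sq]
  have hdd : c ^ 4 / 16 = d * d := by
    rw [← sq, hd, div_eq_mul_inv, div_eq_mul_inv, mul_pow, ← pow_mul, ← ENNReal.inv_pow]
    norm_num
  obtain ⟨M, hM⟩ := exists_box_reach hpa hbe h1 hlb hd0 hcd.le hdtop (box (R : ℤ))
  rw [hdd]
  refine (circuit_of_reach hpa R (max R M) (le_max_left _ _) fun x hx y hy => ?_).trans
    (measure_mono ?_)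
  · have hmono : ∀ z, z ∉ box ((max R M : ℕ) : ℤ) → z ∉ box (M : ℤ) := by
      intro z hz h
      apply hz
      rw [mem_box] at h ⊢
      omega
    exact hM x (hmono x hx) y (hmono y hy)
  · rintro σ ⟨C, hC, hC'⟩
    exact ⟨C, hC, fun z hz => hC' z (hΔR hz)⟩

end Percolation
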